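/- arXiv:1307.1650 — 3 statements merged into one kernel-verified Lean document; each statement's English description precedes it below -/
import Mathlib

section
/- Let n be an odd positive integer and let P_C(n,p) = ∑_{k=(n+1)/2}^{n} C(n,k) p^k (1-p)^{n-k} denote the probability that a majority of n independent workers cheat when each cheats with probability p. If 0 ≤ p ≤ 1/2, then P_C(n+2,p) ≤ P_C(n,p). -/
/-- The probability that a strict majority of `n` independent workers cheat,
when each cheats independently with probability `p`. -/
noncomputable def majProb (n : ℕ) (p : ℝ) : ℝ :=
  ∑ k ∈ Finset.Icc ((n + 1) / 2) n, (n.choose k : ℝ) * p ^ k * (1 - p) ^ (n - k)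

/-!
Write `S n` for the number of cheaters among `n` workers, so that `P(S n = k)` is the value at `p`
of a Bernstein polynomial. Hiring a worker while raising the threshold from `k` to `k + 1` loses
exactly the event that `S n = k` and the new worker is honest; hiring another one while keeping the
threshold at `k + 1` gains exactly the event that `S (n + 1) = k` and the new worker cheats. Hence
`P(S (n + 2) ≥ k + 1) - P(S n ≥ k) = p * P(S (n + 1) = k) - (1 - p) * P(S n = k)`,
and comparing binomial coefficients shows that this is nonpositive when `k ≤ (1 - p) * (n + 1)`.
For `p ≤ 1 / 2` the majority threshold satisfies this bound.
-/

open Polynomial Finset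

section Identities

variable (R : Type*) [CommRing R]

lemma bernsteinPolynomial_succ_succ (n k : ℕ) :
    bernsteinPolynomial R (n + 1) (k + 1) =
      X * bernsteinPolynomial R n k + (1 - X) * bernsteinPolynomial R n (k + 1) := by
  rcases lt_or_ge k n with hkn | hnk
  · have hpow : (1 - X : R[X]) ^ (n - k) = (1 - X) * (1 - X) ^ (n - (k + 1)) := by
      rw [← pow_succ', show n - (k + 1) + 1 = n - k by omega]
    simp only [bernsteinPolynomial, Nat.choose_succ_succ', Nat.add_sub_add_right, Nat.cast_add,
      hpow]
    ring
  · rw [bernsteinPolynomial.eq_zero_of_lt R (Nat.lt_succ_of_le hnk)]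
    simp only [bernsteinPolynomial, Nat.choose_succ_succ', Nat.add_sub_add_right,
      Nat.choose_eq_zero_of_lt (Nat.lt_succ_of_le hnk), add_zero]
    ring

/-- The upper tail of the binomial distribution as a polynomial in the success probability:
its value at `p` is the probability of at least `k` successes in `n` independent trials. -/
noncomputable def bernsteinTail (n k : ℕ) : R[X] :=
  ∑ i ∈ Icc k n, bernsteinPolynomial R n i

lemma bernsteinTail_eq_add (n k : ℕ) :
    bernsteinTail R n k = bernsteinPolynomial R n k + bernsteinTail R n (k + 1) := by
  rcases le_or_gt k n with hkn | hnk
  · rw [bernsteinTail, ← insert_Icc_add_one_left_eq_Icc hkn, sum_insert (by simp), bernsteinTail]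
  · simp [bernsteinTail, bernsteinPolynomial.eq_zero_of_lt R hnk, hnk, hnk.trans k.lt_succ_self]

lemma sum_bernsteinPolynomial_succ (n k : ℕ) :
    ∑ i ∈ Icc k n, bernsteinPolynomial R n (i + 1) = bernsteinTail R n (k + 1) := by
  have hshift : ∑ i ∈ Icc k n, bernsteinPolynomial R n (i + 1) =
      ∑ i ∈ Icc (k + 1) (n + 1), bernsteinPolynomial R n i := by
    rw [← map_add_right_Icc, sum_map]
    rfl
  rw [hshift, bernsteinTail]
  refine (sum_subset (Icc_subset_Icc_right n.le_succ) fun i hi hin ↦ ?_).symm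
  exact bernsteinPolynomial.eq_zero_of_lt R (by simp only [mem_Icc] at hi hin; omega)

lemma bernsteinTail_succ_succ (n k : ℕ) :
    bernsteinTail R (n + 1) (k + 1) = bernsteinTail R n (k + 1) + X * bernsteinPolynomial R n k :=
  calc
    bernsteinTail R (n + 1) (k + 1)
      = ∑ i ∈ Icc k n, bernsteinPolynomial R (n + 1) (i + 1) := by
        rw [bernsteinTail, ← map_add_right_Icc, sum_map]
        rfl
    _ = X * bernsteinTail R n k + (1 - X) * bernsteinTail R n (k + 1) := by
        simp only [bernsteinPolynomial_succ_succ, sum_add_distrib, ← mul_sum,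
          sum_bernsteinPolynomial_succ]
        rfl
    _ = bernsteinTail R n (k + 1) + X * bernsteinPolynomial R n k := by
        rw [bernsteinTail_eq_add R n k]
        ring

lemma bernsteinTail_add_two_succ (n k : ℕ) :
    bernsteinTail R (n + 2) (k + 1) = bernsteinTail R n k +
      (X * bernsteinPolynomial R (n + 1) k - (1 - X) * bernsteinPolynomial R n k) := by
  rw [bernsteinTail_succ_succ R (n + 1), bernsteinTail_succ_succ, bernsteinTail_eq_add R n k]
  ring

end Identities

section Inequalities

variable {R : Type*} [CommRing R] [LinearOrder R] [IsStrictOrderedRing R] {n k : ℕ} {p : R}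

lemma mul_choose_succ_left_le (hk : (k : R) ≤ (1 - p) * (n + 1)) :
    p * (n + 1).choose k ≤ n.choose k := by
  have hratio : (n.choose k : R) * (n + 1) = (n + 1).choose k * (n + 1 - k : ℕ) := by
    exact_mod_cast Nat.choose_mul_succ_eq n k
  have hsub : p * (n + 1) ≤ (n + 1 - k : ℕ) := by
    have : ((n + 1 : ℕ) : R) ≤ (n + 1 - k : ℕ) + k := by exact_mod_cast le_tsub_add
    push_cast at this
    linarith
  refine le_of_mul_le_mul_right ?_ (Nat.cast_add_one_pos n : (0 : R) < n + 1)
  calc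
    p * (n + 1).choose k * (n + 1) = (n + 1).choose k * (p * (n + 1)) := by ring
    _ ≤ (n + 1).choose k * (n + 1 - k : ℕ) := by gcongr
    _ = n.choose k * (n + 1) := hratio.symm

lemma mul_eval_bernsteinPolynomial_succ_left_le (hp : 0 ≤ p) (hk : (k : R) ≤ (1 - p) * (n + 1)) :
    p * (bernsteinPolynomial R (n + 1) k).eval p ≤
      (1 - p) * (bernsteinPolynomial R n k).eval p := by
  have hq : 0 ≤ 1 - p :=
    nonneg_of_mul_nonneg_left (k.cast_nonneg.trans hk) (Nat.cast_add_one_pos n)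
  have hpow : (n.choose k : R) * (1 - p) ^ (n + 1 - k) =
      (1 - p) * (n.choose k * (1 - p) ^ (n - k)) := by
    rcases le_or_gt k n with hkn | hnk
    · rw [Nat.succ_sub hkn, pow_succ]
      ring
    · simp [Nat.choose_eq_zero_of_lt hnk]
  simp only [bernsteinPolynomial, eval_mul, eval_pow, eval_sub, eval_natCast, eval_X, eval_one]
  calc
    p * ((n + 1).choose k * p ^ k * (1 - p) ^ (n + 1 - k))
      = p * (n + 1).choose k * (p ^ k * (1 - p) ^ (n + 1 - k)) := by ring
    _ ≤ n.choose k * (p ^ k * (1 - p) ^ (n + 1 - k)) := by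
        gcongr
        exact mul_choose_succ_left_le hk
    _ = (1 - p) * (n.choose k * p ^ k * (1 - p) ^ (n - k)) := by
        linear_combination p ^ k * hpow

theorem eval_bernsteinTail_add_two_succ_le (hp : 0 ≤ p) (hk : (k : R) ≤ (1 - p) * (n + 1)) :
    (bernsteinTail R (n + 2) (k + 1)).eval p ≤ (bernsteinTail R n k).eval p := by
  have hstep := mul_eval_bernsteinPolynomial_succ_left_le hp hk
  simp only [bernsteinTail_add_two_succ, eval_add, eval_sub, eval_mul, eval_X, eval_one]
  linarith

end Inequalities

lemma majProb_eq_eval_bernsteinTail (n : ℕ) (p : ℝ) :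
    majProb n p = (bernsteinTail ℝ n ((n + 1) / 2)).eval p := by
  simp [majProb, bernsteinTail, bernsteinPolynomial, eval_finsetSum]

/-- For even `n` the threshold `(n + 1) / 2` is `n / 2`, so `majProb n p` counts ties as
majorities. -/
theorem majProb_add_two_le_general (n : ℕ) (p : ℝ) (hp0 : 0 ≤ p) (hp : p ≤ 1 / 2) :
    majProb (n + 2) p ≤ majProb n p := by
  have hthreshold : (((n + 1) / 2 : ℕ) : ℝ) ≤ (1 - p) * (n + 1) :=
    calc
      (((n + 1) / 2 : ℕ) : ℝ) ≤ 1 / 2 * (n + 1) := by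
        simpa [div_eq_inv_mul] using Nat.cast_div_le (α := ℝ) (m := n + 1) (n := 2)
      _ ≤ (1 - p) * (n + 1) := by gcongr; linarith
  rw [majProb_eq_eval_bernsteinTail, majProb_eq_eval_bernsteinTail,
    show (n + 2 + 1) / 2 = (n + 1) / 2 + 1 by omega]
  exact eval_bernsteinTail_add_two_succ_le hp0 hthreshold

theorem majProb_add_two_le (n : ℕ) (hn : Odd n) (hpos : 0 < n)
    (p : ℝ) (hp0 : 0 ≤ p) (hp : p ≤ 1 / 2) :
    majProb (n + 2) p ≤ majProb n p :=
  majProb_add_two_le_general n p hp0 hp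
end

section
/- (Contractor scenario, tunable n, games with n = 1.) Let S, WC_T, WP_CH, MC_V, MB_R be reals with 0 < WC_T < S, WP_CH > 0, and MC_V ≥ 0. Define U_a = MB_R − (WC_T/(S + WP_CH))·MC_V − S and U_∅ = MB_R − (WC_T/S)·(MC_V + S). Then U_a > U_∅ if and only if MC_V > S·(S/WC_T − 1)·(S/WP_CH + 1). -/
/-!
Let `p = WC_T / (S + WP_CH)` and `q = WC_T / S` be the verification probabilities in `(0:n, R_a)`
and `(0:n, R_∅)`. Moving from `R_∅` to `R_a` saves the master `(q - p) * MC_V` in verification and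
costs it `(1 - q) * S` in wages paid without verification. Since `p < q`, the saving wins exactly
when `MC_V` exceeds the break-even value `(1 - q) * S / (q - p)`.
-/

theorem utility_reward_none_lt_reward_all_iff {R : Type*} [Ring R] [PartialOrder R]
    [IsOrderedAddMonoid R] (p q S MCv MBr : R) :
    MBr - q * (MCv + S) < MBr - p * MCv - S ↔ (1 - q) * S < (q - p) * MCv := by
  have gain_eq_saving_sub_wages :
      (MBr - p * MCv - S) - (MBr - q * (MCv + S)) = (q - p) * MCv - (1 - q) * S := by
    noncomm_ring
  rw [← sub_pos, gain_eq_saving_sub_wages, sub_pos]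

theorem expected_wages_eq_saving_at_break_even {K : Type*} [Field K] {S WCt WPch : K}
    (hS : S ≠ 0) (hWCt : WCt ≠ 0) (hWPch : WPch ≠ 0) (hSP : S + WPch ≠ 0) :
    (1 - WCt / S) * S =
      (WCt / S - WCt / (S + WPch)) * (S * (S / WCt - 1) * (S / WPch + 1)) := by
  field_simp
  ring

theorem contractor_n_one_compare_general {K : Type*} [Field K] [LinearOrder K]
    [IsStrictOrderedRing K] {S WCt WPch : K} (MCv MBr : K)
    (hS : 0 < S) (hWCt : 0 < WCt) (hWPch : 0 < WPch) :
    MBr - WCt / (S + WPch) * MCv - S > MBr - WCt / S * (MCv + S) ↔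
      MCv > S * (S / WCt - 1) * (S / WPch + 1) := by
  have verify_less : WCt / (S + WPch) < WCt / S :=
    div_lt_div_of_pos_left hWCt hS (lt_add_of_pos_right S hWPch)
  rw [gt_iff_lt, utility_reward_none_lt_reward_all_iff,
    expected_wages_eq_saving_at_break_even hS.ne' hWCt.ne' hWPch.ne' (add_pos hS hWPch).ne',
    mul_lt_mul_iff_right₀ (sub_pos.2 verify_less)]

/-- Contractor scenario with a single worker (`n = 1`): game `(0:n, R_a)` yields a
higher master utility than game `(0:n, R_∅)` iff
`MC_V > S·(S/WC_T − 1)·(S/WP_CH + 1)`. -/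
theorem contractor_n_one_compare (S WCt WPch MCv MBr : ℝ)
    (hWCt : 0 < WCt) (hS : WCt < S) (hWPch : 0 < WPch) (hMCv : 0 ≤ MCv) :
    MBr - WCt / (S + WPch) * MCv - S > MBr - WCt / S * (MCv + S) ↔
      MCv > S * (S / WCt - 1) * (S / WPch + 1) :=
  contractor_n_one_compare_general MCv MBr (hWCt.trans hS) hWCt hWPch
end

section
/- Let n ≥ 1 be an integer, and let p_C ∈ [0, 1/2], P ∈ [0, 1/2], p_V ∈ [0, 1], MB_R ≥ 0, S ≥ 0, MC_V ≥ 0, MP_W be reals with MP_W ≥ 2·MC_V. Then p_V·((1 − p_C^n)·MB_R − MC_V − (1 − p_C)·n·S) + (1 − p_V)·((1 − P)·MB_R − P·MP_W − n·S) ≥ (MB_R − MP_W)/2 − n·S. -/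
section MasterUtility

variable {K : Type*} [Field K]

/-- The master's expected utility in game `1:1^n` under `R_m`, given that she verifies: she gets
the right answer unless all `n` workers cheat, and pays only the workers who did not. -/
def verifiedUtility (n : ℕ) (pC MBr S MCv : K) : K :=
  (1 - pC ^ n) * MBr - MCv - (1 - pC) * n * S

/-- The master's expected utility in game `1:1^n` under `R_m`, given that she does not verify:
she accepts the majority answer, wrong with probability `P`, and pays every worker. -/
def unverifiedUtility (n : ℕ) (P MBr S MPw : K) : K :=
  (1 - P) * MBr - P * MPw - n * S

/-- The master's expected utility in game `1:1^n` under `R_m`, when she verifies with probability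
`pV`. The majority-cheating probability `P` is a free parameter, not computed from `n` and `pC`. -/
def masterUtility (n : ℕ) (pC P pV MBr S MCv MPw : K) : K :=
  pV * verifiedUtility n pC MBr S MCv + (1 - pV) * unverifiedUtility n P MBr S MPw

variable [LinearOrder K] [IsStrictOrderedRing K] {n : ℕ} {pC P pV MBr S MCv MPw : K}

theorem le_verifiedUtility (hn : n ≠ 0) (hpC0 : 0 ≤ pC) (hpC : pC ≤ 1 / 2)
    (hMBr : 0 ≤ MBr) (hS : 0 ≤ S) :
    MBr / 2 - MCv - n * S ≤ verifiedUtility n pC MBr S MCv := by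
  have all_cheat_le_half : pC ^ n ≤ 1 / 2 :=
    (pow_le_of_le_one hpC0 (hpC.trans one_half_lt_one.le) hn).trans hpC
  have benefit_le : MBr / 2 ≤ (1 - pC ^ n) * MBr := by
    linarith [mul_le_mul_of_nonneg_right all_cheat_le_half hMBr]
  have payment_le : (1 - pC) * n * S ≤ n * S := by
    rw [mul_assoc]
    exact mul_le_of_le_one_left (by positivity) (sub_le_self 1 hpC0)
  unfold verifiedUtility
  linarith

theorem le_unverifiedUtility (hP : P ≤ 1 / 2) (hstake : 0 ≤ MBr + MPw) :
    (MBr - MPw) / 2 - n * S ≤ unverifiedUtility n P MBr S MPw := by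
  have expected_loss_le : P * (MBr + MPw) ≤ 1 / 2 * (MBr + MPw) :=
    mul_le_mul_of_nonneg_right hP hstake
  unfold unverifiedUtility
  linarith

theorem master_utility_lower_bound_general (hn : n ≠ 0)
    (hpC0 : 0 ≤ pC) (hpC : pC ≤ 1 / 2) (hP : P ≤ 1 / 2) (hpV0 : 0 ≤ pV) (hpV1 : pV ≤ 1)
    (hMBr : 0 ≤ MBr) (hS : 0 ≤ S) (hstake : 0 ≤ MBr + MPw) (hMPw : 2 * MCv ≤ MPw) :
    (MBr - MPw) / 2 - n * S ≤ masterUtility n pC P pV MBr S MCv MPw := by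
  have verified : (MBr - MPw) / 2 - n * S ≤ verifiedUtility n pC MBr S MCv :=
    calc (MBr - MPw) / 2 - n * S ≤ MBr / 2 - MCv - n * S := by linarith
      _ ≤ verifiedUtility n pC MBr S MCv := le_verifiedUtility hn hpC0 hpC hMBr hS
  have unverified : (MBr - MPw) / 2 - n * S ≤ unverifiedUtility n P MBr S MPw :=
    le_unverifiedUtility hP hstake
  exact convex_Ici _ verified unverified hpV0 (sub_nonneg.2 hpV1) (add_sub_cancel pV 1)

end MasterUtility

/-- Game `1:1^n` under reward model `R_m`: with `p_C ≤ 1/2`, majority-cheating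
probability `P ≤ 1/2` and `MP_W ≥ 2·MC_V`, the master's expected utility is at least
`(MB_R − MP_W)/2 − n·S`. -/
theorem master_utility_lower_bound (n : ℕ) (hn : 1 ≤ n)
    (pC P pV MBr S MCv MPw : ℝ)
    (hpC0 : 0 ≤ pC) (hpC : pC ≤ 1 / 2)
    (hP0 : 0 ≤ P) (hP : P ≤ 1 / 2)
    (hpV0 : 0 ≤ pV) (hpV1 : pV ≤ 1)
    (hMBr : 0 ≤ MBr) (hS : 0 ≤ S) (hMCv : 0 ≤ MCv) (hMPw : 2 * MCv ≤ MPw) :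
    pV * ((1 - pC ^ n) * MBr - MCv - (1 - pC) * (n : ℝ) * S) +
        (1 - pV) * ((1 - P) * MBr - P * MPw - (n : ℝ) * S) ≥
      (MBr - MPw) / 2 - (n : ℝ) * S := by
  exact master_utility_lower_bound_general (Nat.one_le_iff_ne_zero.1 hn) hpC0 hpC hP hpV0 hpV1
    hMBr hS (by linarith) hMPw
end
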